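/- (Forward Substitution Lemma, case 1.) If there are derivations Γ;(Δ, x:⋃Δ') ⊢ M : β and ;Δ' ⊢! N : []_{⋃Δ'} in the multi-type system for the λI-calculus, where x ∉ supp(Γ) and Δ ≍ Δ', then there is a derivation Γ;(Δ ∨ Δ') ⊢ M[N/x] : β. -/

import Mathlib

set_option maxHeartbeats 1000000

/-! # λ-terms (named variables over ℕ) -/

inductive Lam : Type
  | var : ℕ → Lam
  | app : Lam → Lam → Lam
  | lam : ℕ → Lam → Lam
deriving DecidableEq

namespace Lam

/-- Free variables of a λ-term. -/
def fv : Lam → Finset ℕ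
  | var x => {x}
  | app M N => M.fv ∪ N.fv
  | lam x M => M.fv.erase x

/-- λI-terms: every abstraction `λx.M` satisfies `x ∈ fv M`. -/
def IsI : Lam → Prop
  | var _ => True
  | app M N => M.IsI ∧ N.IsI
  | lam x M => x ∈ M.fv ∧ M.IsI

/-- A variable not belonging to a given finite set. -/
def freshVar (s : Finset ℕ) : ℕ := (s.sup id) + 1

/-- Capture-avoiding simultaneous substitution (bound variables are freshened). -/
def substF : Lam → (ℕ → Lam) → Lam
  | var x, σ => σ x
  | app M N, σ => app (M.substF σ) (N.substF σ)
  | lam x M, σ =>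
      let y := freshVar ((M.fv.erase x).biUnion fun z => (σ z).fv)
      lam y (M.substF (Function.update σ x (var y)))

/-- Capture-avoiding substitution `M[N/x]`. -/
def subst (M : Lam) (x : ℕ) (N : Lam) : Lam :=
  M.substF fun z => if z = x then N else var z

/-- Being an abstraction. -/
def isAbs : Lam → Prop
  | lam _ _ => True
  | _ => False

end Lam

/-- One-step β-reduction. -/
inductive Beta : Lam → Lam → Prop
  | beta (x : ℕ) (M N : Lam) : Beta (.app (.lam x M) N) (M.subst x N)
  | appL {M M' : Lam} (N : Lam) : Beta M M' → Beta (.app M N) (.app M' N)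
  | appR {N N' : Lam} (M : Lam) : Beta N N' → Beta (.app M N) (.app M N')
  | lam (x : ℕ) {M M' : Lam} : Beta M M' → Beta (.lam x M) (.lam x M')

/-- One-step head reduction. -/
inductive Head : Lam → Lam → Prop
  | beta (x : ℕ) (M N : Lam) : Head (.app (.lam x M) N) (M.subst x N)
  | app {M M' : Lam} (N : Lam) : ¬ M.isAbs → Head M M' → Head (.app M N) (.app M' N)
  | lam (x : ℕ) {M M' : Lam} : Head M M' → Head (.lam x M) (.lam x M')

/-- Iterated head reduction. -/
def HeadStar : Lam → Lam → Prop := Relation.ReflTransGen Head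

/-- Terms of the shape `y M₁ ⋯ Mₖ`. -/
inductive Neutral : Lam → Prop
  | var (x : ℕ) : Neutral (.var x)
  | app {M : Lam} (N : Lam) : Neutral M → Neutral (.app M N)

/-- Head normal forms `λx₁…xₙ.y M₁ ⋯ Mₖ`. -/
inductive Hnf : Lam → Prop
  | neutral {M : Lam} : Neutral M → Hnf M
  | lam (x : ℕ) {M : Lam} : Hnf M → Hnf (.lam x M)

/-- `M` has a head normal form. -/
def HasHnf (M : Lam) : Prop := ∃ H, HeadStar M H ∧ Hnf H

/-! # Multi-types -/

/-- Simple types: atoms `a ∈ ℕ`, arrows `[]_X → β` and `[α₀,…,αₙ] → β`. -/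
inductive STy : Type
  | atom : ℕ → STy
  | arr0 : Finset ℕ → STy → STy
  | arrP : STy → List STy → STy → STy

/-- Multiset types: the annotated empty multiset `[]_X` or a
non-empty multiset `[α₀,…,αₙ]` (head plus tail). -/
inductive MTy : Type
  | empty : Finset ℕ → MTy
  | mk : STy → List STy → MTy

/-- The arrow type `ᾱ → β`. -/
def MTy.arr : MTy → STy → STy
  | .empty X, β => .arr0 X β
  | .mk α l, β => .arrP α l β

/-- The underlying multiset of simple types of a multiset type. -/
def MTy.toM : MTy → Multiset STy
  | .empty _ => 0
  | .mk α l => α ::ₘ (l : Multiset STy)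

/-- Multi-types: `σ ::= e_X | α`. -/
inductive OTy : Type
  | esum : Finset ℕ → OTy
  | simple : STy → OTy

mutual
/-- Atoms occurring in a simple type. -/
def STy.atoms : STy → Finset ℕ
  | .atom a => {a}
  | .arr0 _ β => β.atoms
  | .arrP α l β => α.atoms ∪ STy.atomsL l ∪ β.atoms
def STy.atomsL : List STy → Finset ℕ
  | [] => ∅
  | α :: l => α.atoms ∪ STy.atomsL l
end

/-! # Environments -/

/-- Type environments: finitely supported maps from variables
to finite multisets of simple types; added pointwise. -/
abbrev TEnv := ℕ →₀ Multiset STy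

/-- Variable environments: finite partial maps from variables to finite
sets of variables. -/
abbrev VEnv := Finmap (fun _ : ℕ => Finset ℕ)

namespace VEnv

/-- `⋃Δ`: the union of the values of `Δ`. -/
def uni (Δ : VEnv) : Finset ℕ :=
  Δ.keys.biUnion fun x => (Δ.lookup x).getD ∅

/-- Coherence `Δ₀ ≍ Δ₁`: agreement on the common domain. -/
def Coh (Δ₀ Δ₁ : VEnv) : Prop :=
  ∀ x : ℕ, x ∈ Δ₀ → x ∈ Δ₁ → Δ₀.lookup x = Δ₁.lookup x

end VEnv

/-! # The multi-type system for the λI-calculus -/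

mutual
/-- Typing judgement `Γ; Δ ⊢ M : σ`. -/
inductive Der : TEnv → VEnv → Lam → OTy → Prop
  | esum {Δ : VEnv} {M : Lam} :
      Δ.keys = M.fv → Der 0 Δ M (.esum Δ.uni)
  | ax (x : ℕ) (α : STy) (X : Finset ℕ) :
      Der (Finsupp.single x {α}) (Finmap.singleton x X) (.var x) (.simple α)
  | app {Γ₀ Γ₁ : TEnv} {Δ₀ Δ₁ : VEnv} {M N : Lam} {m : MTy} {β : STy} :
      Der Γ₀ Δ₀ M (.simple (m.arr β)) → DerB Γ₁ Δ₁ N m → VEnv.Coh Δ₀ Δ₁ →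
      Der (Γ₀ + Γ₁) (Δ₀ ∪ Δ₁) (.app M N) (.simple β)
  | lam0 {Γ : TEnv} {Δ : VEnv} {x : ℕ} {X : Finset ℕ} {M : Lam} {β : STy} :
      Γ x = 0 → x ∉ Δ → Der Γ (Δ.insert x X) M (.simple β) →
      Der Γ Δ (.lam x M) (.simple (.arr0 X β))
  | lamP {Γ : TEnv} {Δ : VEnv} {x : ℕ} {X : Finset ℕ} {M : Lam} {α : STy}
      {l : List STy} {β : STy} :
      Γ x = 0 → x ∉ Δ →
      Der (Γ + Finsupp.single x (MTy.mk α l).toM) (Δ.insert x X) M (.simple β) →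
      Der Γ Δ (.lam x M) (.simple (.arrP α l β))

/-- Typing judgement `Γ; Δ ⊢! M : ᾱ`. -/
inductive DerB : TEnv → VEnv → Lam → MTy → Prop
  | bang0 {Δ : VEnv} {M : Lam} :
      Δ.keys = M.fv → DerB 0 Δ M (.empty Δ.uni)
  | one {Γ : TEnv} {Δ : VEnv} {M : Lam} {α : STy} :
      Der Γ Δ M (.simple α) → DerB Γ Δ M (.mk α [])
  | cons {Γ₀ Γ₁ : TEnv} {Δ : VEnv} {M : Lam} {α α' : STy} {l : List STy} :
      Der Γ₀ Δ M (.simple α) → DerB Γ₁ Δ M (.mk α' l) →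
      DerB (Γ₀ + Γ₁) Δ M (.mk α (α' :: l))
end

/-- The multi-type interpretation `⟦M⟧`. -/
def interp (M : Lam) : Set (TEnv × VEnv × OTy) :=
  { p | Der p.1 p.2.1 M p.2.2 }

/-! # Ohana trees (coinductive equality, as a greatest fixpoint) -/

/-- Matching of the spines `y M₁ ⋯ Mₖ` of two head normal forms:
same head variable, same number of arguments, arguments related by `R`. -/
inductive SpineMatch (R : Lam → Lam → Prop) : Lam → Lam → Prop
  | var (y : ℕ) : SpineMatch R (.var y) (.var y)
  | app {P Q M N : Lam} : SpineMatch R P Q → R M N →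
      SpineMatch R (.app P M) (.app Q N)

/-- Matching of two head normal forms, comparing abstraction prefixes
up to renaming of the bound variables. -/
inductive HnfMatch (R : Lam → Lam → Prop) : Lam → Lam → Prop
  | base {P Q : Lam} : SpineMatch R P Q → HnfMatch R P Q
  | lam {x y : ℕ} {P Q : Lam} :
      (∀ z : ℕ, z ∉ (P.fv.erase x ∪ Q.fv.erase y) →
        HnfMatch R (P.subst x (.var z)) (Q.subst y (.var z))) →
      HnfMatch R (.lam x P) (.lam y Q)

/-- `R` is an Ohana-tree bisimulation. -/
def OTBisim (R : Lam → Lam → Prop) : Prop :=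
  ∀ M N, R M N →
    (¬ HasHnf M ∧ ¬ HasHnf N ∧ M.fv = N.fv) ∨
    (∃ P Q, HeadStar M P ∧ HeadStar N Q ∧ Hnf P ∧ Hnf Q ∧ HnfMatch R P Q)

/-- Equality of Ohana trees: `OT(M) = OT(N)`. -/
def OTEq (M N : Lam) : Prop := ∃ R, OTBisim R ∧ R M N

/-! # λI-resource terms -/

mutual
inductive RTm : Type
  | var : ℕ → RTm
  | lam : ℕ → RTm → RTm
  | app : RTm → RBag → RTm
inductive RBag : Type
  | empty : Finset ℕ → RBag
  | mk : RTm → List RTm → RBag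
end

noncomputable instance : DecidableEq RTm := fun _ _ => Classical.dec _
noncomputable instance : DecidableEq RBag := fun _ _ => Classical.dec _

mutual
/-- Free variables of a resource term. -/
def RTm.fv : RTm → Finset ℕ
  | .var x => {x}
  | .lam x s => s.fv.erase x
  | .app s b => s.fv ∪ b.fv
/-- Free variables of a bag. -/
def RBag.fv : RBag → Finset ℕ
  | .empty X => X
  | .mk h t => h.fv ∪ RTm.fvL t
/-- Free variables of a list of resource terms. -/
def RTm.fvL : List RTm → Finset ℕ
  | [] => ∅
  | h :: t => h.fv ∪ RTm.fvL t
end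

mutual
/-- λI-resource terms: in every abstraction `λx.s`, `x` occurs free in `s`. -/
inductive RTm.IsIr : RTm → Prop
  | var (x : ℕ) : RTm.IsIr (.var x)
  | lam {x : ℕ} {s : RTm} : x ∈ s.fv → RTm.IsIr s → RTm.IsIr (.lam x s)
  | app {s : RTm} {b : RBag} : RTm.IsIr s → RBag.IsIr b → RTm.IsIr (.app s b)
inductive RBag.IsIr : RBag → Prop
  | empty (X : Finset ℕ) : RBag.IsIr (.empty X)
  | mk {h : RTm} {t : List RTm} : RTm.IsIr h → (∀ u ∈ t, RTm.IsIr u) →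
      RBag.IsIr (.mk h t)
end

/-- The list of elements of a bag. -/
def RBag.toList : RBag → List RTm
  | .empty _ => []
  | .mk h t => h :: t

/-! Linear (bijective) substitution: `LSub s x ts t` means that `t` is obtained
by substituting the elements of the list `ts` for the free occurrences of `x`
in `s`, in left-to-right order (annotations of empty bags absorb). -/
mutual
inductive LSub : RTm → ℕ → List RTm → RTm → Prop
  | var_hit (x : ℕ) (t : RTm) : LSub (.var x) x [t] t
  | var_miss {x y : ℕ} : y ≠ x → LSub (.var y) x [] (.var y)
  | lam {x y : ℕ} {s : RTm} {ts : List RTm} {s' : RTm} :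
      y ≠ x → y ∉ RTm.fvL ts → LSub s x ts s' →
      LSub (.lam y s) x ts (.lam y s')
  | app {s : RTm} {b : RBag} {x : ℕ} {ts₁ ts₂ : List RTm} {s' : RTm} {b' : RBag} :
      LSub s x ts₁ s' → LSubB b x ts₂ b' →
      LSub (.app s b) x (ts₁ ++ ts₂) (.app s' b')
inductive LSubB : RBag → ℕ → List RTm → RBag → Prop
  | empty_hit {X : Finset ℕ} {x : ℕ} {ts : List RTm} :
      x ∈ X → LSubB (.empty X) x ts (.empty ((X.erase x) ∪ RTm.fvL ts))
  | empty_miss {X : Finset ℕ} {x : ℕ} :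
      x ∉ X → LSubB (.empty X) x [] (.empty X)
  | mk {h : RTm} {t : List RTm} {x : ℕ} {ts₁ ts₂ : List RTm} {h' : RTm}
      {t' : List RTm} :
      LSub h x ts₁ h' → LSubL t x ts₂ t' →
      LSubB (.mk h t) x (ts₁ ++ ts₂) (.mk h' t')
inductive LSubL : List RTm → ℕ → List RTm → List RTm → Prop
  | nil (x : ℕ) : LSubL [] x [] []
  | cons {h : RTm} {t : List RTm} {x : ℕ} {ts₁ ts₂ : List RTm} {h' : RTm}
      {t' : List RTm} :
      LSub h x ts₁ h' → LSubL t x ts₂ t' →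
      LSubL (h :: t) x (ts₁ ++ ts₂) (h' :: t')
end

/-- The root resource reduction step `(λx.s)b →r T`:
`T` is the sum of all results of bijective substitution of the elements
of `b` for the free occurrences of `x` in `s`. -/
def RootRed (x : ℕ) (s : RTm) (b : RBag) (T : Finset RTm) : Prop :=
  ∀ u : RTm, u ∈ T ↔ ∃ l : List RTm, l.Perm b.toList ∧ LSub s x l u

/-- Pushing an element on top of a bag. -/
def RBag.push (h : RTm) : RBag → RBag
  | .empty _ => .mk h []
  | .mk h' t => .mk h (h' :: t)

mutual
/-- One-step resource reduction of a term to a finite sum. -/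
inductive RStep : RTm → Finset RTm → Prop
  | root {x : ℕ} {s : RTm} {b : RBag} {T : Finset RTm} :
      RootRed x s b T → RStep (.app (.lam x s) b) T
  | appL {s : RTm} {T : Finset RTm} {b : RBag} :
      RStep s T → RStep (.app s b) (T.image fun s' => .app s' b)
  | appB {s : RTm} {b : RBag} {Tb : Finset RBag} :
      RStepB b Tb → RStep (.app s b) (Tb.image fun b' => .app s b')
  | lam {x : ℕ} {s : RTm} {T : Finset RTm} :
      RStep s T → RStep (.lam x s) (T.image fun s' => .lam x s')
/-- One-step resource reduction inside a bag. -/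
inductive RStepB : RBag → Finset RBag → Prop
  | head {h : RTm} {t : List RTm} {T : Finset RTm} :
      RStep h T → RStepB (.mk h t) (T.image fun h' => .mk h' t)
  | tail {h h₂ : RTm} {t : List RTm} {B : Finset RBag} :
      RStepB (.mk h₂ t) B → RStepB (.mk h (h₂ :: t)) (B.image (RBag.push h))
end

/-- One-step resource reduction on finite sums (linear extension). -/
inductive RRed : Finset RTm → Finset RTm → Prop
  | step {S : Finset RTm} {s : RTm} {T : Finset RTm} :
      s ∈ S → RStep s T → RRed S ((S.erase s) ∪ T)

/-- `→r*`. -/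
def RRedStar : Finset RTm → Finset RTm → Prop := Relation.ReflTransGen RRed

/-! # The resource multi-type system -/

mutual
/-- Resource typing judgement `Γ; Δ ⊢ s : α`. -/
inductive DerR : TEnv → VEnv → RTm → STy → Prop
  | ax (x : ℕ) (α : STy) (X : Finset ℕ) :
      DerR (Finsupp.single x {α}) (Finmap.singleton x X) (.var x) α
  | app {Γ₀ Γ₁ : TEnv} {Δ₀ Δ₁ : VEnv} {s : RTm} {b : RBag} {m : MTy} {β : STy} :
      DerR Γ₀ Δ₀ s (m.arr β) → DerRB Γ₁ Δ₁ b m → VEnv.Coh Δ₀ Δ₁ →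
      DerR (Γ₀ + Γ₁) (Δ₀ ∪ Δ₁) (.app s b) β
  | lam0 {Γ : TEnv} {Δ : VEnv} {x : ℕ} {X : Finset ℕ} {s : RTm} {β : STy} :
      Γ x = 0 → x ∉ Δ → DerR Γ (Δ.insert x X) s β →
      DerR Γ Δ (.lam x s) (.arr0 X β)
  | lamP {Γ : TEnv} {Δ : VEnv} {x : ℕ} {X : Finset ℕ} {s : RTm} {α : STy}
      {l : List STy} {β : STy} :
      Γ x = 0 → x ∉ Δ →
      DerR (Γ + Finsupp.single x (MTy.mk α l).toM) (Δ.insert x X) s β →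
      DerR Γ Δ (.lam x s) (.arrP α l β)
/-- Resource typing judgement `Γ; Δ ⊢! t̄ : ᾱ`. -/
inductive DerRB : TEnv → VEnv → RBag → MTy → Prop
  | bang0 {Δ : VEnv} : DerRB 0 Δ (.empty Δ.keys) (.empty Δ.uni)
  | one {Γ : TEnv} {Δ : VEnv} {t : RTm} {α : STy} :
      DerR Γ Δ t α → DerRB Γ Δ (.mk t []) (.mk α [])
  | cons {Γ₀ Γ₁ : TEnv} {Δ : VEnv} {t t' : RTm} {l : List RTm} {α α' : STy}
      {la : List STy} :
      DerR Γ₀ Δ t α → DerRB Γ₁ Δ (.mk t' l) (.mk α' la) →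
      DerRB (Γ₀ + Γ₁) Δ (.mk t (t' :: l)) (.mk α (α' :: la))
end

/-! # Taylor expansion -/

/-- `Taylor M s`: the resource term `s` belongs to the Taylor expansion `T(M)`. -/
inductive Taylor : Lam → RTm → Prop
  | var (x : ℕ) : Taylor (.var x) (.var x)
  | lam {M : Lam} {s : RTm} (x : ℕ) : Taylor M s → Taylor (.lam x M) (.lam x s)
  | app0 {M N : Lam} {s : RTm} : Taylor M s →
      Taylor (.app M N) (.app s (.empty N.fv))
  | appP {M N : Lam} {s t : RTm} {l : List RTm} :
      Taylor M s → Taylor N t → (∀ u ∈ l, Taylor N u) →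
      Taylor (.app M N) (.app s (.mk t l))

/-! # Miscellaneous constructions for the last statement -/

/-- The variable environment `Δ_id` mapping each `x ∈ s` to `{x}`. -/
def idEnv (s : Finset ℕ) : VEnv :=
  (s.sort (· ≤ ·)).foldr (fun x Δ => Δ.insert x ({x} : Finset ℕ)) ∅

/-- The term `y M₁ ⋯ Mₖ`. -/
def Lam.spineApp (y : ℕ) (l : List Lam) : Lam := l.foldl .app (.var y)

/-- The type `[]_{fv N₁} → ⋯ → []_{fv Nₖ} → a`. -/
def yTyRest (a : ℕ) : List Lam → STy
  | [] => .atom a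
  | N :: l => .arr0 N.fv (yTyRest a l)

/-- The type `[]_{fv M₁} → ⋯ → [α] → ⋯ → []_{fv Mₖ} → a`, with `[α]`
in the `i`-th argument position (0-based). -/
def yTy (α : STy) (a : ℕ) : List Lam → ℕ → STy
  | [], _ => .atom a
  | _ :: l, 0 => .arrP α [] (yTyRest a l)
  | N :: l, (i+1) => .arr0 N.fv (yTy α a l i)

/-!
Substitution renames every binder it crosses, so the induction has to run over an arbitrary
simultaneous substitution `σ`. No type has to be produced for `σ z` unless `Γ` types `z`; the `σ` at
hand sends each such `z` to a variable `ρ z`, so axioms go to axioms and `Γ` is pushed forward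
along `ρ`. On the other side, the sets recorded by `Δ` have to be the unions
`Δ z = ⋃_{w ∈ fv(σ z)} e w` of sets `e w` given to the variables of the resulting term: this is
exactly what keeps the annotations `⋃Δ` of empty multisets unchanged, as
`fv(M[σ]) = ⋃_{z ∈ fv(M)} fv(σ z)`. For `M[N/x]` take `ρ = id` and `e = Δ ∨ Δ'`; the condition at
`x` then reads `Δ x = ⋃Δ'`.
-/

section FinmapInsert

variable {α : Type*} {β : α → Type*} [DecidableEq α]

theorem finmap_keys_insert (s : Finmap β) (a : α) (b : β a) :
    (s.insert a b).keys = insert a s.keys := by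
  ext
  simp only [Finmap.mem_keys, Finmap.mem_insert, Finset.mem_insert]

theorem keys_eq_erase_of_keys_insert_eq {s : Finmap β} {a : α} {b : β a} {S : Finset α}
    (ha : a ∉ s) (h : (s.insert a b).keys = S) : s.keys = S.erase a := by
  rw [← h, finmap_keys_insert, Finset.erase_insert (mt Finmap.mem_keys.1 ha)]

theorem mem_of_keys_insert_eq {s : Finmap β} {a : α} {b : β a} {S : Finset α}
    (h : (s.insert a b).keys = S) : a ∈ S := by
  rw [← h, finmap_keys_insert]
  exact Finset.mem_insert_self _ _

end FinmapInsert

section FinsuppMapDomain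

variable {α β M : Type*} [AddCommMonoid M]

theorem support_add_of_subsingleton_addUnits [DecidableEq α] [Subsingleton (AddUnits M)]
    (v w : α →₀ M) : (v + w).support = v.support ∪ w.support := by
  ext
  simp only [Finsupp.mem_support_iff, Finsupp.add_apply, Finset.mem_union, ne_eq, add_eq_zero,
    not_and_or]

theorem mapDomain_apply_eq_zero {v : α →₀ M} {f : α → β} {b : β}
    (h : ∀ a ∈ v.support, f a ≠ b) : v.mapDomain f b = 0 := by
  classical
  rw [← Finsupp.notMem_support_iff]
  intro hb
  obtain ⟨a, ha, hab⟩ := Finset.mem_image.1 (Finsupp.mapDomain_support hb)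
  exact h a ha hab

theorem mapDomain_update_of_apply_eq_zero [DecidableEq α] {v : α →₀ M} {a : α} (ha : v a = 0)
    (f : α → β) (b : β) : v.mapDomain (Function.update f a b) = v.mapDomain f := by
  refine Finsupp.mapDomain_congr fun c hc => Function.update_of_ne ?_ _ _
  rintro rfl
  exact Finsupp.mem_support_iff.1 hc ha

end FinsuppMapDomain

namespace VEnv

/-- The restriction of a total assignment `e` to the finite domain `S`, as a variable environment;
with `S = fv(M[σ])` it types the result of a substitution. -/
def tabulate (e : ℕ → Finset ℕ) (S : Finset ℕ) : VEnv where
  entries := S.val.map fun z => ⟨z, e z⟩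
  nodupKeys := by
    rw [← Multiset.nodup_keys, Multiset.keys, Multiset.map_map]
    exact S.nodup.map fun _ _ h => h

/-- `Δ` is a restriction of the total assignment `f`; naming a common `f` is how coherence and
equality of variable environments are proved. -/
def AgreesWith (Δ : VEnv) (f : ℕ → Finset ℕ) : Prop :=
  ∀ z ∈ Δ, Δ.lookup z = some (f z)

/-- The total assignment extending `Δ`, with the value `∅` outside the domain of `Δ`; it serves as
the assignment with which `Δ`, and every part of `Δ`, agrees. -/
def getD (Δ : VEnv) (z : ℕ) : Finset ℕ := (Δ.lookup z).getD ∅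

@[simp]
theorem keys_tabulate (e : ℕ → Finset ℕ) (S : Finset ℕ) : (tabulate e S).keys = S := by
  ext
  simp [Finmap.mem_keys, Finmap.mem_def, tabulate, Multiset.keys]

@[simp]
theorem mem_tabulate {e : ℕ → Finset ℕ} {S : Finset ℕ} {z : ℕ} : z ∈ tabulate e S ↔ z ∈ S := by
  rw [← Finmap.mem_keys, keys_tabulate]

theorem agreesWith_tabulate (e : ℕ → Finset ℕ) (S : Finset ℕ) : (tabulate e S).AgreesWith e :=
  fun _ hz => Finmap.lookup_eq_some_iff.2 (Multiset.mem_map_of_mem _ (mem_tabulate.1 hz))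

theorem agreesWith_getD (Δ : VEnv) : Δ.AgreesWith Δ.getD := by
  intro _ hz
  obtain ⟨X, hX⟩ := Finmap.mem_iff.1 hz
  simp [getD, hX]

namespace AgreesWith

variable {Δ Δ₀ Δ₁ : VEnv} {e f : ℕ → Finset ℕ}

theorem coh (h₀ : Δ₀.AgreesWith f) (h₁ : Δ₁.AgreesWith f) : Coh Δ₀ Δ₁ :=
  fun z hz₀ hz₁ => (h₀ z hz₀).trans (h₁ z hz₁).symm

theorem eq_of_keys_eq (h₀ : Δ₀.AgreesWith f) (h₁ : Δ₁.AgreesWith f) (hk : Δ₀.keys = Δ₁.keys) :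
    Δ₀ = Δ₁ := by
  refine Finmap.ext_lookup fun z => ?_
  have hmem : z ∈ Δ₀ ↔ z ∈ Δ₁ := by rw [← Finmap.mem_keys, hk, Finmap.mem_keys]
  by_cases hz : z ∈ Δ₀
  · exact h₀.coh h₁ z hz (hmem.1 hz)
  · rw [Finmap.lookup_eq_none.2 hz, Finmap.lookup_eq_none.2 (mt hmem.2 hz)]

theorem eq_tabulate (h : Δ.AgreesWith f) : Δ = tabulate f Δ.keys :=
  h.eq_of_keys_eq (agreesWith_tabulate _ _) (keys_tabulate _ _).symm

theorem uni_eq (h : Δ.AgreesWith f) : Δ.uni = Δ.keys.biUnion f := by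
  refine Finset.biUnion_congr rfl fun z hz => ?_
  rw [h z (Finmap.mem_keys.1 hz), Option.getD_some]

theorem union (h₀ : Δ₀.AgreesWith f) (h₁ : Δ₁.AgreesWith f) : (Δ₀ ∪ Δ₁).AgreesWith f := by
  intro z hz
  by_cases hz₀ : z ∈ Δ₀
  · rw [Finmap.lookup_union_left hz₀, h₀ z hz₀]
  · rw [Finmap.lookup_union_right hz₀, h₁ z ((Finmap.mem_union.1 hz).resolve_left hz₀)]

theorem of_union_left (h : (Δ₀ ∪ Δ₁).AgreesWith f) : Δ₀.AgreesWith f := by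
  intro z hz
  rw [← h z (Finmap.mem_union.2 (.inl hz)), Finmap.lookup_union_left hz]

theorem of_union_right (h : (Δ₀ ∪ Δ₁).AgreesWith f) (hcoh : Coh Δ₀ Δ₁) : Δ₁.AgreesWith f := by
  intro z hz
  rw [← h z (Finmap.mem_union.2 (.inr hz))]
  by_cases hz₀ : z ∈ Δ₀
  · rw [Finmap.lookup_union_left hz₀, hcoh z hz₀ hz]
  · rw [Finmap.lookup_union_right hz₀]

theorem insert {x : ℕ} {X : Finset ℕ} (h : Δ.AgreesWith f) (hfe : ∀ z ∈ Δ, z ≠ x → f z = e z)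
    (hx : X = e x) : VEnv.AgreesWith (Δ.insert x X) e := by
  intro z hz
  obtain rfl | hzx := eq_or_ne z x
  · rw [Finmap.lookup_insert, hx]
  · have hzΔ : z ∈ Δ := (Finmap.mem_insert.1 hz).resolve_left hzx
    rw [Finmap.lookup_insert_of_ne _ hzx, h z hzΔ, hfe z hzΔ hzx]

end AgreesWith

theorem tabulate_singleton (e : ℕ → Finset ℕ) (x : ℕ) :
    tabulate e {x} = Finmap.singleton x (e x) := rfl

theorem tabulate_union (e : ℕ → Finset ℕ) (S T : Finset ℕ) :
    tabulate e (S ∪ T) = tabulate e S ∪ tabulate e T :=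
  (agreesWith_tabulate _ _).eq_of_keys_eq
    ((agreesWith_tabulate _ _).union (agreesWith_tabulate _ _)) (by simp [Finmap.keys_union])

theorem tabulate_update (e : ℕ → Finset ℕ) {S : Finset ℕ} {y : ℕ} (hy : y ∈ S) (X : Finset ℕ) :
    tabulate (Function.update e y X) S = (tabulate e (S.erase y)).insert y X := by
  refine (agreesWith_tabulate _ _).eq_of_keys_eq
    ((agreesWith_tabulate e _).insert (fun z _ hz => ?_) ?_) ?_
  · rw [Function.update_of_ne hz]
  · rw [Function.update_self]
  · rw [finmap_keys_insert, keys_tabulate, keys_tabulate, Finset.insert_erase hy]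

end VEnv

namespace Lam

theorem freshVar_notMem (S : Finset ℕ) : freshVar S ∉ S := fun h =>
  (Nat.lt_succ_self _).not_ge (Finset.le_sup (f := id) h)

theorem exists_substF_lam (x : ℕ) (M : Lam) (σ : ℕ → Lam) :
    ∃ y, (∀ z ∈ (lam x M).fv, y ∉ (σ z).fv) ∧
      (lam x M).substF σ = lam y (M.substF (Function.update σ x (var y))) := by
  refine ⟨_, fun z hz hy => ?_, rfl⟩
  exact freshVar_notMem _ (Finset.mem_biUnion.2 ⟨z, hz, hy⟩)

theorem fv_substF (M : Lam) (σ : ℕ → Lam) :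
    (M.substF σ).fv = M.fv.biUnion fun z => (σ z).fv := by
  induction M generalizing σ with
  | var x => simp only [substF, fv, Finset.singleton_biUnion]
  | app M N ihM ihN => simp only [substF, fv, ihM, ihN, Finset.union_biUnion]
  | lam x M ih =>
    obtain ⟨y, hy, hsubst⟩ := exists_substF_lam x M σ
    rw [hsubst, fv, ih]
    ext w
    simp only [fv, Finset.mem_erase, Finset.mem_biUnion, Function.update_apply] at hy ⊢
    constructor
    · rintro ⟨hwy, z, hz, hw⟩
      obtain rfl | hzx := eq_or_ne z x
      · rw [if_pos rfl] at hw
        exact absurd (Finset.mem_singleton.1 hw) hwy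
      · rw [if_neg hzx] at hw
        exact ⟨z, ⟨hzx, hz⟩, hw⟩
    · rintro ⟨z, ⟨hzx, hz⟩, hw⟩
      refine ⟨?_, z, hz, by rwa [if_neg hzx]⟩
      rintro rfl
      exact hy z ⟨hzx, hz⟩ hw

theorem mem_fv_substF_update {M : Lam} {x : ℕ} (hx : x ∈ M.fv) (σ : ℕ → Lam) (y : ℕ) :
    y ∈ (M.substF (Function.update σ x (var y))).fv := by
  rw [fv_substF, Finset.mem_biUnion]
  exact ⟨x, hx, by rw [Function.update_self]; exact Finset.mem_singleton_self y⟩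

theorem fv_subst {M : Lam} {x : ℕ} (hx : x ∈ M.fv) (N : Lam) :
    (M.subst x N).fv = M.fv.erase x ∪ N.fv := by
  have hvar : (M.fv.erase x).biUnion (fun z => (if z = x then N else var z).fv) = M.fv.erase x := by
    conv_rhs => rw [← Finset.biUnion_singleton_eq_self (s := M.fv.erase x)]
    refine Finset.biUnion_congr rfl fun z hz => ?_
    rw [if_neg (Finset.ne_of_mem_erase hz)]
    rfl
  rw [subst, fv_substF]
  nth_rw 1 [← Finset.insert_erase hx]
  rw [Finset.biUnion_insert, hvar, if_pos rfl, Finset.union_comm]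

end Lam

mutual

theorem Der.keys_eq_fv {Γ : TEnv} {Δ : VEnv} {M : Lam} {τ : OTy} (h : Der Γ Δ M τ) :
    Δ.keys = M.fv := by
  match h with
  | .esum hk => exact hk
  | .ax x _ X => exact Finmap.keys_singleton x X
  | .app hM hN _ => rw [Finmap.keys_union, hM.keys_eq_fv, hN.keys_eq_fv, Lam.fv]
  | .lam0 _ hx hM => exact keys_eq_erase_of_keys_insert_eq hx hM.keys_eq_fv
  | .lamP _ hx hM => exact keys_eq_erase_of_keys_insert_eq hx hM.keys_eq_fv

theorem DerB.keys_eq_fv {Γ : TEnv} {Δ : VEnv} {M : Lam} {m : MTy} (h : DerB Γ Δ M m) :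
    Δ.keys = M.fv := by
  match h with
  | .bang0 hk => exact hk
  | .one hM => exact hM.keys_eq_fv
  | .cons hM _ => exact hM.keys_eq_fv

end

mutual

theorem Der.support_subset_fv {Γ : TEnv} {Δ : VEnv} {M : Lam} {τ : OTy} (h : Der Γ Δ M τ) :
    Γ.support ⊆ M.fv := by
  match h with
  | .esum _ => exact Finset.empty_subset _
  | .ax _ _ _ => exact Finsupp.support_single_subset
  | .app hM hN _ =>
    rw [support_add_of_subsingleton_addUnits]
    exact Finset.union_subset_union hM.support_subset_fv hN.support_subset_fv
  | .lam0 hx _ hM =>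
    exact Finset.subset_erase.2 ⟨hM.support_subset_fv, Finsupp.notMem_support_iff.2 hx⟩
  | .lamP hx _ hM =>
    have hΓ := hM.support_subset_fv
    rw [support_add_of_subsingleton_addUnits] at hΓ
    exact Finset.subset_erase.2
      ⟨Finset.union_subset_left hΓ, Finsupp.notMem_support_iff.2 hx⟩

theorem DerB.support_subset_fv {Γ : TEnv} {Δ : VEnv} {M : Lam} {m : MTy} (h : DerB Γ Δ M m) :
    Γ.support ⊆ M.fv := by
  match h with
  | .bang0 _ => exact Finset.empty_subset _
  | .one hM => exact hM.support_subset_fv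
  | .cons hM hM' =>
    rw [support_add_of_subsingleton_addUnits]
    exact Finset.union_subset hM.support_subset_fv hM'.support_subset_fv

end

/-- The simultaneous substitution `σ` is compatible with the environments `Γ; Δ`, the renaming `ρ`
and the assignment `e`: it acts as `ρ` on the variables typed by `Γ`, and the set that `Δ` gives to
a variable `z` is the union of those that `e` gives to the free variables of `σ z`. -/
structure SubstCompat (Γ : TEnv) (Δ : VEnv) (σ : ℕ → Lam) (ρ : ℕ → ℕ) (e : ℕ → Finset ℕ) :
    Prop where
  eq_var : ∀ z ∈ Γ.support, σ z = .var (ρ z)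
  agreesWith : Δ.AgreesWith fun z => (σ z).fv.biUnion e

namespace SubstCompat

variable {Γ Γ₀ Γ₁ : TEnv} {Δ Δ₀ Δ₁ : VEnv} {σ : ℕ → Lam} {ρ : ℕ → ℕ} {e : ℕ → Finset ℕ}

theorem of_add_left (h : SubstCompat (Γ₀ + Γ₁) Δ σ ρ e) : SubstCompat Γ₀ Δ σ ρ e where
  eq_var z hz := h.eq_var z <| by
    rw [support_add_of_subsingleton_addUnits]
    exact Finset.mem_union_left _ hz
  agreesWith := h.agreesWith

theorem of_add_right (h : SubstCompat (Γ₀ + Γ₁) Δ σ ρ e) : SubstCompat Γ₁ Δ σ ρ e :=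
  of_add_left (add_comm Γ₀ Γ₁ ▸ h)

theorem of_union_left (h : SubstCompat Γ (Δ₀ ∪ Δ₁) σ ρ e) : SubstCompat Γ Δ₀ σ ρ e :=
  ⟨h.eq_var, h.agreesWith.of_union_left⟩

theorem of_union_right (h : SubstCompat Γ (Δ₀ ∪ Δ₁) σ ρ e) (hcoh : VEnv.Coh Δ₀ Δ₁) :
    SubstCompat Γ Δ₁ σ ρ e :=
  ⟨h.eq_var, h.agreesWith.of_union_right hcoh⟩

theorem update (h : SubstCompat Γ Δ σ ρ e) {x y : ℕ} (hy : ∀ z ∈ Δ, y ∉ (σ z).fv)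
    (μ : Multiset STy) (X : Finset ℕ) :
    SubstCompat (Γ + Finsupp.single x μ) (Δ.insert x X) (Function.update σ x (.var y))
      (Function.update ρ x y) (Function.update e y X) where
  eq_var z hz := by
    obtain rfl | hzx := eq_or_ne z x
    · rw [Function.update_self, Function.update_self]
    · rw [Function.update_of_ne hzx, Function.update_of_ne hzx]
      refine h.eq_var z ?_
      rwa [Finsupp.mem_support_iff, Finsupp.add_apply, Finsupp.single_eq_of_ne hzx, add_zero,
        ← Finsupp.mem_support_iff] at hz
  agreesWith := by
    refine h.agreesWith.insert (fun z hz hzx => ?_) ?_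
    · rw [Function.update_of_ne hzx]
      refine Finset.biUnion_congr rfl fun w hw => (Function.update_of_ne ?_ _ _).symm
      rintro rfl
      exact hy z hz hw
    · rw [Function.update_self, Lam.fv, Finset.singleton_biUnion, Function.update_self]

theorem exists_substF_lam (h : SubstCompat Γ Δ σ ρ e) {x : ℕ} {M : Lam}
    (hΔ : Δ.keys = (Lam.lam x M).fv) (hΓ : Γ.support ⊆ (Lam.lam x M).fv) :
    ∃ y, (Lam.lam x M).substF σ = .lam y (M.substF (Function.update σ x (.var y))) ∧
      Γ.mapDomain ρ y = 0 ∧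
      ∀ μ X, SubstCompat (Γ + Finsupp.single x μ) (Δ.insert x X) (Function.update σ x (.var y))
        (Function.update ρ x y) (Function.update e y X) := by
  obtain ⟨y, hy, hsubst⟩ := Lam.exists_substF_lam x M σ
  refine ⟨y, hsubst, mapDomain_apply_eq_zero fun z hz hzy => ?_, h.update fun z hz => ?_⟩
  · refine hy z (hΓ hz) ?_
    rw [h.eq_var z hz, hzy]
    exact Finset.mem_singleton_self y
  · exact hy z (hΔ ▸ Finmap.mem_keys.2 hz)

theorem uni_tabulate_fv_substF (h : SubstCompat Γ Δ σ ρ e) {M : Lam} (hk : Δ.keys = M.fv) :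
    (VEnv.tabulate e (M.substF σ).fv).uni = Δ.uni := by
  rw [(VEnv.agreesWith_tabulate _ _).uni_eq, VEnv.keys_tabulate, Lam.fv_substF,
    Finset.biUnion_biUnion, h.agreesWith.uni_eq, hk]

end SubstCompat

mutual

theorem Der.substF {Γ : TEnv} {Δ : VEnv} {M : Lam} {τ : OTy} {σ : ℕ → Lam} {ρ : ℕ → ℕ}
    {e : ℕ → Finset ℕ} (h : Der Γ Δ M τ) (hσ : SubstCompat Γ Δ σ ρ e) :
    Der (Γ.mapDomain ρ) (VEnv.tabulate e (M.substF σ).fv) (M.substF σ) τ := by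
  match h with
  | .esum hk =>
    rw [Finsupp.mapDomain_zero, ← hσ.uni_tabulate_fv_substF hk]
    exact .esum (VEnv.keys_tabulate _ _)
  | .ax x α X =>
    have hx : σ x = .var (ρ x) := hσ.eq_var x (by simp)
    rw [Finsupp.mapDomain_single, Lam.substF, hx, Lam.fv, VEnv.tabulate_singleton]
    exact .ax _ _ _
  | .app hM hN hcoh =>
    rw [Finsupp.mapDomain_add, Lam.substF, Lam.fv, VEnv.tabulate_union]
    exact .app (hM.substF hσ.of_add_left.of_union_left)
      (hN.substF (hσ.of_add_right.of_union_right hcoh))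
      ((VEnv.agreesWith_tabulate _ _).coh (VEnv.agreesWith_tabulate _ _))
  | .lam0 (X := X) hxΓ hxΔ hM =>
    have hlam := Der.lam0 hxΓ hxΔ hM
    obtain ⟨y, hsubst, hyΓ, hσ'⟩ := hσ.exists_substF_lam hlam.keys_eq_fv hlam.support_subset_fv
    have hyM := Lam.mem_fv_substF_update (mem_of_keys_insert_eq hM.keys_eq_fv) σ y
    have ih := hM.substF (by simpa using hσ' 0 X)
    rw [VEnv.tabulate_update _ hyM, mapDomain_update_of_apply_eq_zero hxΓ] at ih
    rw [hsubst]
    exact .lam0 hyΓ (by simp [Lam.fv]) ih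
  | .lamP (X := X) hxΓ hxΔ hM =>
    have hlam := Der.lamP hxΓ hxΔ hM
    obtain ⟨y, hsubst, hyΓ, hσ'⟩ := hσ.exists_substF_lam hlam.keys_eq_fv hlam.support_subset_fv
    have hyM := Lam.mem_fv_substF_update (mem_of_keys_insert_eq hM.keys_eq_fv) σ y
    have ih := hM.substF (hσ' _ X)
    rw [VEnv.tabulate_update _ hyM, Finsupp.mapDomain_add, mapDomain_update_of_apply_eq_zero hxΓ,
      Finsupp.mapDomain_single, Function.update_self] at ih
    rw [hsubst]
    exact .lamP hyΓ (by simp [Lam.fv]) ih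

theorem DerB.substF {Γ : TEnv} {Δ : VEnv} {M : Lam} {m : MTy} {σ : ℕ → Lam} {ρ : ℕ → ℕ}
    {e : ℕ → Finset ℕ} (h : DerB Γ Δ M m) (hσ : SubstCompat Γ Δ σ ρ e) :
    DerB (Γ.mapDomain ρ) (VEnv.tabulate e (M.substF σ).fv) (M.substF σ) m := by
  match h with
  | .bang0 hk =>
    rw [Finsupp.mapDomain_zero, ← hσ.uni_tabulate_fv_substF hk]
    exact .bang0 (VEnv.keys_tabulate _ _)
  | .one hM => exact .one (hM.substF hσ)
  | .cons hM hM' =>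
    rw [Finsupp.mapDomain_add]
    exact .cons (hM.substF hσ.of_add_left) (hM'.substF hσ.of_add_right)

end

theorem substCompat_subst {Γ : TEnv} {Δ Δ' : VEnv} {N : Lam} {x : ℕ} (hΓ : x ∉ Γ.support)
    (hcoh : VEnv.Coh Δ Δ') (hN : Δ'.keys = N.fv) :
    SubstCompat Γ (Δ.insert x Δ'.uni) (fun z => if z = x then N else .var z) id
      (Δ ∪ Δ').getD where
  eq_var z hz := by
    rw [if_neg (ne_of_mem_of_not_mem hz hΓ), id]
  agreesWith := by
    have hunion := (Δ ∪ Δ').agreesWith_getD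
    refine hunion.of_union_left.insert (fun z _ hzx => ?_) ?_
    · rw [if_neg hzx, Lam.fv, Finset.singleton_biUnion]
    · rw [if_pos rfl, ← hN, (hunion.of_union_right hcoh).uni_eq]

theorem stmt1_general {Γ : TEnv} {Δ Δ' : VEnv} {M N : Lam} {x : ℕ} {τ : OTy}
    (hxΓ : x ∉ Γ.support) (hxΔ : x ∉ Δ) (hcoh : VEnv.Coh Δ Δ')
    (hM : Der Γ (Δ.insert x Δ'.uni) M τ) (hN : DerB 0 Δ' N (.empty Δ'.uni)) :
    Der Γ (Δ ∪ Δ') (M.subst x N) τ := by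
  have hfv : (M.subst x N).fv = (Δ ∪ Δ').keys := by
    rw [Lam.fv_subst (mem_of_keys_insert_eq hM.keys_eq_fv), Finmap.keys_union,
      keys_eq_erase_of_keys_insert_eq hxΔ hM.keys_eq_fv, hN.keys_eq_fv]
  have hsubst := hM.substF (substCompat_subst hxΓ hcoh hN.keys_eq_fv)
  rw [Finsupp.mapDomain_id] at hsubst
  rw [(Δ ∪ Δ').agreesWith_getD.eq_tabulate, ← hfv]
  exact hsubst

/-- Forward Substitution Lemma, case 1. -/
theorem stmt1 (Γ : TEnv) (Δ Δ' : VEnv) (M N : Lam) (x : ℕ) (β : STy)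
    (hM : M.IsI) (hN : N.IsI)
    (hxΓ : x ∉ Γ.support) (hxΔ : x ∉ Δ) (hcoh : VEnv.Coh Δ Δ')
    (h1 : Der Γ (Δ.insert x (VEnv.uni Δ')) M (.simple β))
    (h2 : DerB 0 Δ' N (.empty (VEnv.uni Δ'))) :
    Der Γ (Δ ∪ Δ') (M.subst x N) (.simple β) :=
  stmt1_general hxΓ hxΔ hcoh h1 h2
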